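/- Let n ≥ 2, let k > 1 be a natural number, and let a_1, ..., a_n and b_1, ..., b_n be real numbers with 0 < a_1 < a_2 < ... < a_n and b_1 > b_2 > ... > b_n > 0. Let A be the n×n matrix with entries A_{ij} = (b_i + a_j)^(k-1). Then every k×k minor of A is positive: for all row indices i_1 < ... < i_k and column indices j_1 < ... < j_k in {1,...,n}, the determinant of the corresponding k×k submatrix of A is positive. -/

import Mathlib

/-!
By the binomial theorem `(b i + a j) ^ m = ∑ l, b i ^ (m - l) * m.choose l * a j ^ l`, so a minor of
order `m + 1` is the product of a Vandermonde determinant in the `b`s with its columns reversed, a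
product of binomial coefficients and a Vandermonde determinant in the `a`s. The reversal is what
makes a strictly decreasing `b` contribute a positive factor. Homogenizing the entries to
`(x i * z j + y i * w j) ^ m` treats the two Vandermonde factors alike.
-/

open Matrix Finset

section CommRing

variable {R : Type*} [CommRing R]

theorem of_mul_add_mul_pow_eq_rectVandermonde_mul {ι κ : Type*} (x y : ι → R) (z w : κ → R)
    (m : ℕ) :
    of (fun i j => (x i * z j + y i * w j) ^ m) =
      rectVandermonde x y (m + 1) * diagonal (fun l : Fin (m + 1) => (m.choose l : R)) *
        (rectVandermonde z w (m + 1))ᵀ := by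
  ext i j
  simp only [of_apply, mul_apply (M := _ * diagonal _), mul_diagonal, transpose_apply,
    rectVandermonde_apply, add_pow, sum_range, Fin.val_rev, Nat.add_sub_add_right]
  exact sum_congr rfl fun l _ => by ring

theorem det_of_mul_add_mul_pow {m : ℕ} (x y z w : Fin (m + 1) → R) :
    (of fun i j => (x i * z j + y i * w j) ^ m).det =
      (projVandermonde x y).det * (∏ l : Fin (m + 1), (m.choose l : R)) *
        (projVandermonde z w).det := by
  rw [of_mul_add_mul_pow_eq_rectVandermonde_mul, det_mul, det_mul, det_transpose,
    det_diagonal, projVandermonde, projVandermonde]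

end CommRing

section OrderedRing

variable {R : Type*} [CommRing R] [PartialOrder R] [IsStrictOrderedRing R]

theorem det_projVandermonde_pos {n : ℕ} {v w : Fin n → R}
    (h : ∀ i j, i < j → v i * w j < v j * w i) : 0 < (projVandermonde v w).det := by
  rw [det_projVandermonde]
  exact prod_pos fun i _ => prod_pos fun j hj => sub_pos.mpr (h i j (mem_Ioi.mp hj))

theorem det_of_mul_add_mul_pow_pos {m : ℕ} {x y z w : Fin (m + 1) → R}
    (hxy : ∀ i j, i < j → x i * y j < x j * y i) (hzw : ∀ i j, i < j → z i * w j < z j * w i) :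
    0 < (of fun i j => (x i * z j + y i * w j) ^ m).det := by
  have prod_choose_pos : 0 < ∏ l : Fin (m + 1), (m.choose l : R) :=
    prod_pos fun l _ => Nat.cast_pos.mpr (Nat.choose_pos l.is_le)
  rw [det_of_mul_add_mul_pow]
  exact mul_pos (mul_pos (det_projVandermonde_pos hxy) prod_choose_pos)
    (det_projVandermonde_pos hzw)

theorem power_sum_matrix_k_minors_positive_general {ι κ : Type*} [Preorder ι] [Preorder κ]
    {m : ℕ} {a : κ → R} {b : ι → R} (ha : StrictMono a) (hb : StrictAnti b)
    {r : Fin (m + 1) → ι} {c : Fin (m + 1) → κ} (hr : StrictMono r) (hc : StrictMono c) :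
    0 < ((of fun i j => (b i + a j) ^ m).submatrix r c).det := by
  have hb_pair : ∀ i j, i < j → 1 * b (r j) < 1 * b (r i) := fun i j hij => by
    simpa only [one_mul] using hb (hr hij)
  have ha_pair : ∀ i j, i < j → a (c i) * 1 < a (c j) * 1 := fun i j hij => by
    simpa only [mul_one] using ha (hc hij)
  have entry_eq : (of fun i j => (b i + a j) ^ m).submatrix r c =
      of fun i j => (1 * a (c j) + b (r i) * 1) ^ m := by
    ext i j
    simp only [submatrix_apply, of_apply, one_mul, mul_one, add_comm]
  rw [entry_eq]
  exact det_of_mul_add_mul_pow_pos (x := fun _ => 1) (w := fun _ => 1) hb_pair ha_pair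

end OrderedRing

theorem power_sum_matrix_k_minors_positive (n k : ℕ) (hn : 2 ≤ n) (hk : 1 < k)
    (a b : Fin n → ℝ)
    (ha : StrictMono a) (ha0 : ∀ i, 0 < a i)
    (hb : StrictAnti b) (hb0 : ∀ i, 0 < b i)
    (r : Fin k → Fin n) (c : Fin k → Fin n)
    (hr : StrictMono r) (hc : StrictMono c) :
    0 < ((Matrix.of fun i j : Fin n => (b i + a j) ^ (k - 1)).submatrix r c).det := by
  obtain ⟨m, rfl⟩ := Nat.exists_eq_add_one.mpr (Nat.zero_lt_of_lt hk)
  exact power_sum_matrix_k_minors_positive_general ha hb hr hc
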